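/- arXiv:2407.08686 — 2 statements merged into one kernel-verified Lean document; each statement's English description precedes it below -/
import Mathlib

section
/- Pool deficit and capacity characterization: Let 0 < λ < τ, let b ≥ 0, r > 0, G > 0 be real numbers, and define h(β) = b·min{β, τ − λ} − r·β for β ≥ 0. If (b − r)(τ − λ) ≥ G (which forces b > r), then setting β⁻ = G/(b − r) and β⁺ = (b(τ − λ) − G)/r one has 0 < β⁻ ≤ β⁺, and for every β ≥ 0: h(β) ≥ G if and only if β⁻ ≤ β ≤ β⁺. If instead (b − r)(τ − λ) < G, then h(β) < G for every β ≥ 0. -/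
/-!
When `0 ≤ b`, the surplus `b * min β t - r * β` is the minimum of the affine functions `(b - r) * β`
and `b * t - r * β`, which cross at `β = t`. If `0 < r < b`, the first increases and reaches `G` at
the deficit, while the second decreases and reaches `G` at the capacity, so the surplus is at least
`G` exactly between the two. The peak `(b - r) * t`, attained at `β = t`, decides whether this
interval is nonempty.
-/

section OrderedRing

variable {R : Type*} [Ring R] [LinearOrder R]

/-- The quantity `h(β)` compared with the SPO's gap: the reward that external delegation `β` brings
to a pool with reward slope `b` and room `t = τ - λ` below saturation, net of `r` per unit of
delegation. -/
def delegationSurplus (b r t β : R) : R := b * min β t - r * β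

theorem delegationSurplus_self (b r t : R) : delegationSurplus b r t t = (b - r) * t := by
  rw [delegationSurplus, min_self, sub_mul]

variable [IsOrderedRing R] {b r : R}

theorem delegationSurplus_eq_min (hb : 0 ≤ b) (t β : R) :
    delegationSurplus b r t β = min ((b - r) * β) (b * t - r * β) := by
  rw [delegationSurplus, mul_min_of_nonneg _ _ hb, ← min_sub_sub_right, sub_mul]

theorem delegationSurplus_le_max {β : R} (hr : 0 ≤ r) (hβ : 0 ≤ β) (t : R) :
    delegationSurplus b r t β ≤ max 0 ((b - r) * t) := by
  rcases le_total β t with hβt | htβ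
  · rw [delegationSurplus, min_eq_left hβt, ← sub_mul, le_max_iff]
    rcases le_total b r with hbr | hrb
    · exact .inl (mul_nonpos_of_nonpos_of_nonneg (sub_nonpos.2 hbr) hβ)
    · exact .inr (mul_le_mul_of_nonneg_left hβt (sub_nonneg.2 hrb))
  · rw [delegationSurplus, min_eq_right htβ, sub_mul]
    exact le_max_of_le_right (sub_le_sub_left (mul_le_mul_of_nonneg_left htβ hr) _)

end OrderedRing

section OrderedField

variable {K : Type*} [Field K]

/-- The deficit `β⁻` of a pool with gap `G`: the least external delegation that keeps its SPO
content. It has this meaning only when `0 < r < b` and `G ≤ (b - r) * t`, where `t = τ - λ` is the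
room below saturation. -/
def poolDeficit (b r G : K) : K := G / (b - r)

/-- The capacity `β⁺` of a pool with gap `G` and room `t = τ - λ` below saturation: the most
external delegation that keeps its SPO content. It has this meaning only when `0 < r < b` and
`G ≤ (b - r) * t`. -/
def poolCapacity (b r t G : K) : K := (b * t - G) / r

variable [LinearOrder K] [IsStrictOrderedRing K] {b r t G : K}

theorem le_delegationSurplus_iff (hr : 0 < r) (hrb : r < b) (β : K) :
    G ≤ delegationSurplus b r t β ↔ poolDeficit b r G ≤ β ∧ β ≤ poolCapacity b r t G := by
  rw [delegationSurplus_eq_min (hr.trans hrb).le, le_min_iff, poolDeficit, poolCapacity,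
    div_le_iff₀' (sub_pos.2 hrb), le_div_iff₀' hr, le_sub_comm]

theorem poolDeficit_le_poolCapacity (hr : 0 < r) (hrb : r < b) (hpeak : G ≤ (b - r) * t) :
    poolDeficit b r G ≤ poolCapacity b r t G := by
  rw [← delegationSurplus_self, le_delegationSurplus_iff hr hrb] at hpeak
  exact hpeak.1.trans hpeak.2

theorem pool_deficit_capacity_characterization_general (ht : 0 < t) (hr : 0 < r) (hG : 0 < G) :
    (G ≤ (b - r) * t →
      0 < poolDeficit b r G ∧
      poolDeficit b r G ≤ poolCapacity b r t G ∧
      ∀ β : K, G ≤ delegationSurplus b r t β ↔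
        poolDeficit b r G ≤ β ∧ β ≤ poolCapacity b r t G) ∧
    ((b - r) * t < G → ∀ β : K, 0 ≤ β → delegationSurplus b r t β < G) := by
  refine ⟨fun hpeak => ?_, fun hpeak β hβ => ?_⟩
  · have hbr : 0 < b - r := pos_of_mul_pos_left (hG.trans_le hpeak) ht.le
    have hrb : r < b := sub_pos.1 hbr
    exact ⟨div_pos hG hbr, poolDeficit_le_poolCapacity hr hrb hpeak,
      le_delegationSurplus_iff hr hrb⟩
  · exact (delegationSurplus_le_max hr.le hβ t).trans_lt (max_lt hG hpeak)

end OrderedField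

/-- **Pool deficit and capacity characterization.**
Let `0 < lam < tau`, `b ≥ 0`, `r > 0`, `G > 0` and define
`h(β) = b * min β (tau − lam) − r * β` for `β ≥ 0`.
If `(b − r)(tau − lam) ≥ G` then, setting `β⁻ = G/(b − r)` and
`β⁺ = (b(tau − lam) − G)/r`, one has `0 < β⁻ ≤ β⁺` and, for every `β ≥ 0`,
`h(β) ≥ G ↔ β⁻ ≤ β ≤ β⁺`.  If instead `(b − r)(tau − lam) < G`, then `h(β) < G`
for every `β ≥ 0`. -/
theorem pool_deficit_capacity_characterization
    (lam tau b r G : ℝ)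
    (hlam : 0 < lam) (hlt : lam < tau)
    (hb : 0 ≤ b) (hr : 0 < r) (hG : 0 < G) :
    ((b - r) * (tau - lam) ≥ G →
      (0 < G / (b - r) ∧
       G / (b - r) ≤ (b * (tau - lam) - G) / r ∧
       ∀ β : ℝ, 0 ≤ β →
         ((b * min β (tau - lam) - r * β ≥ G) ↔
          (G / (b - r) ≤ β ∧ β ≤ (b * (tau - lam) - G) / r)))) ∧
    ((b - r) * (tau - lam) < G →
      ∀ β : ℝ, 0 ≤ β → b * min β (tau - lam) - r * β < G) := by
  have h := pool_deficit_capacity_characterization_general (b := b) (sub_pos.2 hlt) hr hG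
  exact ⟨fun hpeak => (h.1 hpeak).imp_right (And.imp_right fun hiff β _ => hiff β), h.2⟩
end

section
/- Sufficient conditions for pure Nash equilibrium in proper delegation games: Let p be a joint strategy profile of a proper delegation game G(ρ, τ, (s, c, ε)) with resulting per-unit delegation reward r. Suppose: (i) every delegator delegates only to feasible pools (d_i(j) > 0 implies pool j is active and feasible); (ii) every non-idle player i earns utility at least ε_i; (iii) every idle player i satisfies max{r, α(s_i, c_min)}·s_i ≤ ε_i, i.e. their utility from unilaterally deviating to delegation is at most ε_i; and (iv) every SPO i, with pledge λ_i = s_i < τ and external delegation β_i, satisfies β⁻(λ_i, c_i, ε_i, r) ≤ β_i ≤ β⁺(λ_i, c_i, ε_i, r). Then p is a pure Nash equilibrium: no player can strictly increase their utility by unilaterally changing their action. -/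
open scoped Classical

/-- A proper delegation game `G(ρ, τ, (s, c, ε))` with `n` players.  Player `i` has
stake `s i > 0`, pool operation cost `c i` with `0 ≤ cmin ≤ c i`, and idle utility
`eps i > 0`.  The pool reward function is capped separable with cap `tau > max_i s i`:
`ρ(λ,β) = a λ + b λ * min (τ − λ) β`, and the threat of deviation
`α(s,c) = (a s − c)/s` is monotonically nondecreasing in `s` on `(0, max_i s i]`. -/
structure ProperDelegationGame (n : ℕ) where
  s : Fin n → ℝ
  c : Fin n → ℝ
  eps : Fin n → ℝ
  a : ℝ → ℝ
  b : ℝ → ℝ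
  tau : ℝ
  cmin : ℝ
  s_pos : ∀ i, 0 < s i
  eps_pos : ∀ i, 0 < eps i
  cmin_nonneg : 0 ≤ cmin
  cmin_le : ∀ i, cmin ≤ c i
  a_nonneg : ∀ x : ℝ, 0 ≤ x → 0 ≤ a x
  b_nonneg : ∀ x : ℝ, 0 ≤ x → 0 ≤ b x
  tau_gt : ∀ i, s i < tau
  alpha_mono : ∀ x y : ℝ, 0 < x → x ≤ y → (∃ i, y ≤ s i) →
    (a x - cmin) / x ≤ (a y - cmin) / y

namespace ProperDelegationGame

/-- An action of a player: remain idle, operate a stake pool, or delegate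
according to a delegation profile `d : Fin n → ℝ`. -/
inductive Action (n : ℕ) where
  | idle : Action n
  | spo : Action n
  | deleg : (Fin n → ℝ) → Action n

variable {n : ℕ}

/-- A valid action for player `i`: a delegation profile must assign nothing to `i`
itself, be nonnegative, and distribute exactly the stake `s i`. -/
def ValidAction (g : ProperDelegationGame n) (i : Fin n) : Action n → Prop
  | .idle => True
  | .spo => True
  | .deleg d => d i = 0 ∧ (∀ j, 0 ≤ d j) ∧ ∑ j, d j = g.s i

/-- A valid joint strategy profile. -/
def ValidProfile (g : ProperDelegationGame n) (p : Fin n → Action n) : Prop :=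
  ∀ i, g.ValidAction i (p i)

/-- Player `i` is a stake pool operator under `p`. -/
def isSPO (p : Fin n → Action n) (i : Fin n) : Prop := p i = Action.spo

/-- Player `i` is a delegator under `p`. -/
def isDeleg (p : Fin n → Action n) (i : Fin n) : Prop := ∃ d, p i = Action.deleg d

/-- The amount that player `i` delegates to pool `j` under `p`. -/
def delegAmt (p : Fin n → Action n) (i j : Fin n) : ℝ :=
  match p i with
  | .deleg d => d j
  | _ => 0

/-- The pledge of pool `j`: `s j` if `j` is an SPO, `0` otherwise. -/
noncomputable def pledge (g : ProperDelegationGame n) (p : Fin n → Action n)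
    (j : Fin n) : ℝ :=
  if isSPO p j then g.s j else 0

/-- The external stake delegated to pool `j`. -/
def extDeleg (p : Fin n → Action n) (j : Fin n) : ℝ := ∑ i, delegAmt p i j

/-- The total size of pool `j` (pledge plus external delegation). -/
noncomputable def poolSize (g : ProperDelegationGame n) (p : Fin n → Action n)
    (j : Fin n) : ℝ :=
  pledge g p j + extDeleg p j

/-- The capped separable pool reward function `ρ(λ,β) = a λ + b λ * min (τ−λ) β`. -/
noncomputable def rho (g : ProperDelegationGame n) (lam beta : ℝ) : ℝ :=
  g.a lam + g.b lam * min (g.tau - lam) beta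

/-- The threat of deviation `α(x,c) = (a x − c)/x`. -/
noncomputable def alpha (g : ProperDelegationGame n) (x c' : ℝ) : ℝ :=
  (g.a x - c') / x

/-- The per-unit delegation reward of the profile `p`: the maximum of
`α(s i, cmin)` over all delegators `i`, and `0` if there are no delegators. -/
noncomputable def rOf (g : ProperDelegationGame n) (p : Fin n → Action n) : ℝ :=
  if h : (Finset.univ.filter fun i => isDeleg p i).Nonempty then
    (Finset.univ.filter fun i => isDeleg p i).sup' h fun i => g.alpha (g.s i) g.cmin
  else 0

/-- Pool `j` is (active and) feasible: `j` is an SPO and `ρ(λ_j, β_j) ≥ r·σ_j`. -/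
def feasible (g : ProperDelegationGame n) (p : Fin n → Action n) (j : Fin n) : Prop :=
  isSPO p j ∧ rho g (pledge g p j) (extDeleg p j) ≥ rOf g p * poolSize g p j

/-- The reward player `i` receives from delegating to pool `j`: `r · d_i(j)` from an
active feasible pool, the proportional share from an active infeasible pool, `0`
from an inactive pool. -/
noncomputable def delegReward (g : ProperDelegationGame n) (p : Fin n → Action n)
    (i j : Fin n) : ℝ :=
  if isSPO p j then
    (if feasible g p j then rOf g p * delegAmt p i j
     else (delegAmt p i j / poolSize g p j) * rho g (pledge g p j) (extDeleg p j))
  else 0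

/-- The utility of player `i` under profile `p`: `ε_i` if idle, pool rewards minus the
operation cost `c_i` if an SPO, and total delegation rewards if a delegator. -/
noncomputable def utility (g : ProperDelegationGame n) (p : Fin n → Action n)
    (i : Fin n) : ℝ :=
  match p i with
  | .idle => g.eps i
  | .spo =>
      (if feasible g p i then
        rho g (g.s i) (extDeleg p i) - rOf g p * extDeleg p i
       else (g.s i / poolSize g p i) * rho g (g.s i) (extDeleg p i)) - g.c i
  | .deleg _ => ∑ j, delegReward g p i j

/-- The gap `G(λ,c,ε,r) = max (ε + c − a λ) (max (r − α(λ,cmin)) 0 · λ + (c − cmin))`. -/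
noncomputable def gap (g : ProperDelegationGame n) (lam c' eps' r : ℝ) : ℝ :=
  max (eps' + c' - g.a lam)
    (max (r - g.alpha lam g.cmin) 0 * lam + (c' - g.cmin))

/-- The pool deficit `β⁻(λ,c,ε,r)`, valued in `EReal` (it is `⊤` when no amount of
external delegation can keep the SPO content). -/
noncomputable def betaMinus (g : ProperDelegationGame n) (lam c' eps' r : ℝ) : EReal :=
  if (g.b lam - r) * (g.tau - lam) ≥ gap g lam c' eps' r then
    ((gap g lam c' eps' r / (g.b lam - r) : ℝ) : EReal)
  else ⊤

/-- The pool capacity `β⁺(λ,c,ε,r)`, valued in `EReal` (it is `⊥` when no amount of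
external delegation can keep the SPO content). -/
noncomputable def betaPlus (g : ProperDelegationGame n) (lam c' eps' r : ℝ) : EReal :=
  if (g.b lam - r) * (g.tau - lam) ≥ gap g lam c' eps' r then
    (((g.b lam * (g.tau - lam) - gap g lam c' eps' r) / r : ℝ) : EReal)
  else ⊥

/-- `p` is a pure Nash equilibrium: no player can strictly increase their utility by
unilaterally switching to another valid action. -/
def IsPNE (g : ProperDelegationGame n) (p : Fin n → Action n) : Prop :=
  ∀ i : Fin n, ∀ q : Action n, g.ValidAction i q →
    utility g (Function.update p i q) i ≤ utility g p i

end ProperDelegationGame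

open ProperDelegationGame

/-!
Call `max ε_i (max r (α(s_i, c_min)) * s_i)` the reservation utility of player `i`. It bounds what
any deviation of `i` can earn. Delegation pays at most `max R 0` on every unit, where
`R ≤ max r (α(s_i, c_min))` is the new per-unit reward, because an infeasible pool pays less than
`R` per unit; a total of `0` is below `ε_i`. A newly opened pool attracts no external
delegation, because nobody delegates to an inactive pool, so it earns
`a(s_i) - c_i ≤ α(s_i, c_min) * s_i`.

Conversely every player already earns their reservation utility in `p`. For an operator this is
the meaning of the gap: `a(s_i) + G` is the reservation utility plus `c_i`, and
`β⁻ ≤ β_i ≤ β⁺` forces the net gain `b(s_i) * min (τ - s_i) β_i - r * β_i` from external delegation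
to cover `G`.
-/

namespace ProperDelegationGame

/- Below the cap `t` the deficit bound gives the claim, above it the capacity bound does. When a
denominator is degenerate (`b = r` or `r ≤ 0`), `hcap` takes over. -/
theorem le_mul_min_sub_mul {K : Type*} [Field K] [LinearOrder K] [IsStrictOrderedRing K]
    {G b r t β : K} (hG : 0 ≤ G) (ht : 0 < t) (hcap : G ≤ (b - r) * t)
    (hdeficit : G / (b - r) ≤ β) (hcapacity : β ≤ (b * t - G) / r) :
    G ≤ b * min t β - r * β := by
  have hbr : 0 ≤ b - r := nonneg_of_mul_nonneg_left (hG.trans hcap) ht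
  rcases le_total β t with hβt | htβ
  · rw [min_eq_right hβt, ← sub_mul]
    rcases hbr.eq_or_lt with hzero | hpos
    · simpa only [← hzero, zero_mul] using hcap
    · rwa [div_le_iff₀' hpos] at hdeficit
  · rw [min_eq_left htβ]
    rcases le_or_gt r 0 with hr | hr
    · have hrβ : r * β ≤ r * t := mul_le_mul_of_nonpos_left htβ hr
      linarith
    · rw [le_div_iff₀' hr] at hcapacity
      linarith

variable {n : ℕ} {g : ProperDelegationGame n} {p : Fin n → Action n} {i j : Fin n}
  {d : Fin n → ℝ} {q : Action n}

theorem rho_zero {lam : ℝ} (h : lam ≤ g.tau) : rho g lam 0 = g.a lam := by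
  rw [rho, min_eq_right (sub_nonneg.mpr h), mul_zero, add_zero]

theorem alpha_mul_self {x : ℝ} (hx : x ≠ 0) (c' : ℝ) : g.alpha x c' * x = g.a x - c' :=
  div_mul_cancel₀ _ hx

theorem gap_nonneg {lam c' : ℝ} (hlam : 0 ≤ lam) (hc : g.cmin ≤ c') (eps' r : ℝ) :
    0 ≤ gap g lam c' eps' r :=
  le_max_of_le_right
    (add_nonneg (mul_nonneg (le_max_right _ _) hlam) (sub_nonneg.mpr hc))

theorem a_add_gap {lam : ℝ} (hlam : 0 < lam) (c' eps' r : ℝ) :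
    g.a lam + gap g lam c' eps' r = max eps' (max r (g.alpha lam g.cmin) * lam) + c' := by
  have hexcess : g.a lam + (max (r - g.alpha lam g.cmin) 0 * lam + (c' - g.cmin)) =
      max r (g.alpha lam g.cmin) * lam + c' := by
    have hmax : max r (g.alpha lam g.cmin) =
        max (r - g.alpha lam g.cmin) 0 + g.alpha lam g.cmin := by
      rw [← max_add_add_right, sub_add_cancel, zero_add]
    rw [hmax, add_mul, alpha_mul_self hlam.ne']
    ring
  rw [gap, ← max_add_add_left, hexcess, add_sub_cancel, max_add_add_right]

theorem delegAmt_of_eq_deleg (h : p i = .deleg d) (j : Fin n) : delegAmt p i j = d j := by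
  simp only [delegAmt, h]

theorem isDeleg_of_delegAmt_ne_zero (h : delegAmt p i j ≠ 0) : isDeleg p i := by
  cases hpi : p i with
  | idle => simp [delegAmt, hpi] at h
  | spo => simp [delegAmt, hpi] at h
  | deleg d => exact ⟨d, hpi⟩

theorem ValidProfile.update (hp : g.ValidProfile p) (hq : g.ValidAction i q) :
    g.ValidProfile (Function.update p i q) := by
  intro j
  rcases eq_or_ne j i with rfl | hji
  · simpa only [Function.update_self] using hq
  · simpa only [Function.update_of_ne hji] using hp j

theorem ValidProfile.delegAmt_nonneg (hp : g.ValidProfile p) (i j : Fin n) :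
    0 ≤ delegAmt p i j := by
  by_contra! hneg
  obtain ⟨d, hd⟩ := isDeleg_of_delegAmt_ne_zero hneg.ne
  have hvalid : g.ValidAction i (.deleg d) := hd ▸ hp i
  exact hneg.not_ge (delegAmt_of_eq_deleg hd j ▸ hvalid.2.1 j)

theorem ValidProfile.extDeleg_nonneg (hp : g.ValidProfile p) (j : Fin n) : 0 ≤ extDeleg p j :=
  Finset.sum_nonneg fun i _ => hp.delegAmt_nonneg i j

theorem ValidProfile.sum_delegAmt (hp : g.ValidProfile p) (h : isDeleg p i) :
    ∑ j, delegAmt p i j = g.s i := by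
  obtain ⟨d, hd⟩ := h
  have hvalid : g.ValidAction i (.deleg d) := hd ▸ hp i
  simp only [delegAmt_of_eq_deleg hd, hvalid.2.2]

theorem pledge_of_isSPO (h : isSPO p j) : pledge g p j = g.s j := if_pos h

theorem ValidProfile.poolSize_pos (hp : g.ValidProfile p) (h : isSPO p j) :
    0 < poolSize g p j := by
  rw [poolSize, pledge_of_isSPO h]
  exact add_pos_of_pos_of_nonneg (g.s_pos j) (hp.extDeleg_nonneg j)

theorem alpha_le_rOf (h : isDeleg p i) : g.alpha (g.s i) g.cmin ≤ rOf g p := by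
  have hmem : i ∈ Finset.univ.filter fun i => isDeleg p i :=
    Finset.mem_filter.mpr ⟨Finset.mem_univ i, h⟩
  rw [rOf, dif_pos ⟨i, hmem⟩]
  exact Finset.le_sup' (fun i => g.alpha (g.s i) g.cmin) hmem

theorem rOf_update_deleg_le (g : ProperDelegationGame n) (p : Fin n → Action n) (i : Fin n)
    (d : Fin n → ℝ) :
    rOf g (Function.update p i (.deleg d)) ≤ max (rOf g p) (g.alpha (g.s i) g.cmin) := by
  have hmem : i ∈ Finset.univ.filter fun k => isDeleg (Function.update p i (.deleg d)) k :=
    Finset.mem_filter.mpr ⟨Finset.mem_univ i, d, Function.update_self ..⟩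
  rw [rOf, dif_pos ⟨i, hmem⟩]
  refine Finset.sup'_le _ _ fun k hk => ?_
  rcases eq_or_ne k i with rfl | hki
  · exact le_max_right _ _
  · have hdeleg : isDeleg p k := by
      simpa only [isDeleg, Function.update_of_ne hki] using (Finset.mem_filter.mp hk).2
    exact le_max_of_le_left (alpha_le_rOf hdeleg)

theorem delegReward_of_feasible (h : feasible g p j) (i : Fin n) :
    delegReward g p i j = rOf g p * delegAmt p i j := by
  rw [delegReward, if_pos h.1, if_pos h]

theorem delegReward_of_delegAmt_eq_zero (h : delegAmt p i j = 0) : delegReward g p i j = 0 := by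
  simp only [delegReward, h, mul_zero, zero_div, zero_mul, ite_self]

theorem ValidProfile.delegReward_le_of_isSPO (hp : g.ValidProfile p) (h : isSPO p j)
    (i : Fin n) : delegReward g p i j ≤ rOf g p * delegAmt p i j := by
  by_cases hf : feasible g p j
  · exact (delegReward_of_feasible hf i).le
  have hsize := hp.poolSize_pos h
  have hrho : rho g (pledge g p j) (extDeleg p j) ≤ rOf g p * poolSize g p j :=
    le_of_not_ge fun hge => hf ⟨h, hge⟩
  rw [delegReward, if_pos h, if_neg hf]
  calc delegAmt p i j / poolSize g p j * rho g (pledge g p j) (extDeleg p j)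
      ≤ delegAmt p i j / poolSize g p j * (rOf g p * poolSize g p j) :=
        mul_le_mul_of_nonneg_left hrho (div_nonneg (hp.delegAmt_nonneg i j) hsize.le)
    _ = rOf g p * delegAmt p i j := by field_simp

theorem ValidProfile.delegReward_le (hp : g.ValidProfile p) (i j : Fin n) :
    delegReward g p i j ≤ max (rOf g p) 0 * delegAmt p i j := by
  have hamt := hp.delegAmt_nonneg i j
  by_cases h : isSPO p j
  · exact (hp.delegReward_le_of_isSPO h i).trans
      (mul_le_mul_of_nonneg_right (le_max_left _ _) hamt)
  · rw [delegReward, if_neg h]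
    exact mul_nonneg (le_max_right _ _) hamt

theorem utility_of_idle (h : p i = .idle) : utility g p i = g.eps i := by
  simp only [utility, h]

theorem utility_of_isDeleg (h : isDeleg p i) : utility g p i = ∑ j, delegReward g p i j := by
  obtain ⟨d, hd⟩ := h
  simp only [utility, hd]

theorem utility_of_feasible (h : feasible g p i) :
    utility g p i = rho g (g.s i) (extDeleg p i) - rOf g p * extDeleg p i - g.c i := by
  have hspo : p i = .spo := h.1
  simp only [utility, hspo, if_pos h]

theorem utility_of_isSPO_of_extDeleg_eq_zero (h : isSPO p i) (hext : extDeleg p i = 0) :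
    utility g p i = g.a (g.s i) - g.c i := by
  have hspo : p i = .spo := h
  have hsize : poolSize g p i = g.s i := by rw [poolSize, pledge_of_isSPO h, hext, add_zero]
  simp only [utility, hspo, hext, hsize, rho_zero (g.tau_gt i).le, div_self (g.s_pos i).ne',
    mul_zero, sub_zero, one_mul, ite_self]

theorem ValidProfile.utility_le_of_isDeleg (hp : g.ValidProfile p) (h : isDeleg p i) :
    utility g p i ≤ max (rOf g p) 0 * g.s i := by
  rw [utility_of_isDeleg h, ← hp.sum_delegAmt h, Finset.mul_sum]
  exact Finset.sum_le_sum fun j _ => hp.delegReward_le i j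

theorem ValidProfile.utility_eq_of_isDeleg (hp : g.ValidProfile p) (h : isDeleg p i)
    (hfeas : ∀ j, 0 < delegAmt p i j → feasible g p j) :
    utility g p i = rOf g p * g.s i := by
  rw [utility_of_isDeleg h, ← hp.sum_delegAmt h, Finset.mul_sum]
  refine Finset.sum_congr rfl fun j _ => ?_
  rcases (hp.delegAmt_nonneg i j).eq_or_lt with hzero | hpos
  · rw [delegReward_of_delegAmt_eq_zero hzero.symm, ← hzero, mul_zero]
  · exact delegReward_of_feasible (hfeas j hpos) i

/-- The reservation utility of player `i`: the larger of the idle utility and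
`max r (α(s_i, c_min)) * s_i`, which bounds a positive payoff of `i` from deviating to delegation.
It is a function of `p` only through the per-unit reward `r`. -/
noncomputable def reservationUtility (g : ProperDelegationGame n) (p : Fin n → Action n)
    (i : Fin n) : ℝ :=
  max (g.eps i) (max (rOf g p) (g.alpha (g.s i) g.cmin) * g.s i)

theorem ValidProfile.utility_update_deleg_le (hp : g.ValidProfile p)
    (hd : g.ValidAction i (.deleg d)) :
    utility g (Function.update p i (.deleg d)) i ≤ reservationUtility g p i := by
  have hs := (g.s_pos i).le
  have hdeleg : isDeleg (Function.update p i (.deleg d)) i := ⟨d, Function.update_self ..⟩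
  calc utility g (Function.update p i (.deleg d)) i
      ≤ max (rOf g (Function.update p i (.deleg d))) 0 * g.s i :=
        (hp.update hd).utility_le_of_isDeleg hdeleg
    _ = max (rOf g (Function.update p i (.deleg d)) * g.s i) 0 := by
        rw [max_mul_of_nonneg _ _ hs, zero_mul]
    _ ≤ reservationUtility g p i :=
        max_le
          (le_max_of_le_right (mul_le_mul_of_nonneg_right (rOf_update_deleg_le g p i d) hs))
          (le_max_of_le_left (g.eps_pos i).le)

theorem extDeleg_update_spo_eq_zero (h : ∀ k, delegAmt p k j = 0) (i : Fin n) :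
    extDeleg (Function.update p i .spo) j = 0 := by
  refine Finset.sum_eq_zero fun k _ => ?_
  rcases eq_or_ne k i with rfl | hki
  · simp only [delegAmt, Function.update_self]
  · simpa only [delegAmt, Function.update_of_ne hki] using h k

theorem utility_update_spo_le (h : ∀ k, delegAmt p k i = 0) :
    utility g (Function.update p i .spo) i ≤ reservationUtility g p i := by
  have hspo : isSPO (Function.update p i .spo) i := Function.update_self ..
  calc utility g (Function.update p i .spo) i
      = g.a (g.s i) - g.c i :=
        utility_of_isSPO_of_extDeleg_eq_zero hspo (extDeleg_update_spo_eq_zero h i)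
    _ ≤ g.a (g.s i) - g.cmin := sub_le_sub_left (g.cmin_le i) _
    _ = g.alpha (g.s i) g.cmin * g.s i := (alpha_mul_self (g.s_pos i).ne' _).symm
    _ ≤ reservationUtility g p i :=
        le_max_of_le_right (mul_le_mul_of_nonneg_right (le_max_right _ _) (g.s_pos i).le)

theorem ValidProfile.isPNE_of_reservationUtility_le (hp : g.ValidProfile p)
    (hactive : ∀ i j, 0 < delegAmt p i j → isSPO p j)
    (hres : ∀ i, reservationUtility g p i ≤ utility g p i) : IsPNE g p := by
  intro i q hq
  by_cases hpq : q = p i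
  · rw [hpq, Function.update_eq_self]
  refine le_trans ?_ (hres i)
  cases q with
  | idle =>
    rw [utility_of_idle (Function.update_self ..)]
    exact le_max_left _ _
  | spo =>
    have hinactive : ∀ k, delegAmt p k i = 0 := fun k =>
      (hp.delegAmt_nonneg k i).eq_of_not_lt' fun hpos => hpq (hactive k i hpos).symm
    exact utility_update_spo_le hinactive
  | deleg d => exact hp.utility_update_deleg_le hq

theorem ValidProfile.reservationUtility_le_of_isDeleg (hp : g.ValidProfile p)
    (h : isDeleg p i) (hfeas : ∀ j, 0 < delegAmt p i j → feasible g p j)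
    (heps : g.eps i ≤ utility g p i) : reservationUtility g p i ≤ utility g p i := by
  refine max_le heps ?_
  rw [max_eq_left (alpha_le_rOf h), hp.utility_eq_of_isDeleg h hfeas]

theorem gap_le_of_betaMinus_le_of_le_betaPlus {lam c' eps' r β : ℝ} (hlam : 0 ≤ lam)
    (htau : lam < g.tau) (hc : g.cmin ≤ c') (hminus : betaMinus g lam c' eps' r ≤ (β : EReal))
    (hplus : (β : EReal) ≤ betaPlus g lam c' eps' r) :
    gap g lam c' eps' r ≤ g.b lam * min (g.tau - lam) β - r * β := by
  by_cases hcap : (g.b lam - r) * (g.tau - lam) ≥ gap g lam c' eps' r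
  · rw [betaMinus, if_pos hcap, EReal.coe_le_coe_iff] at hminus
    rw [betaPlus, if_pos hcap, EReal.coe_le_coe_iff] at hplus
    exact le_mul_min_sub_mul (gap_nonneg hlam hc eps' r) (sub_pos.mpr htau) hcap hminus hplus
  · rw [betaMinus, if_neg hcap] at hminus
    exact absurd hminus (EReal.coe_lt_top β).not_ge

theorem reservationUtility_add_cost_le_of_gap_le
    (hgap : gap g (g.s i) (g.c i) (g.eps i) (rOf g p) ≤
      g.b (g.s i) * min (g.tau - g.s i) (extDeleg p i) - rOf g p * extDeleg p i) :
    reservationUtility g p i + g.c i ≤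
      rho g (g.s i) (extDeleg p i) - rOf g p * extDeleg p i := by
  rw [reservationUtility, ← a_add_gap (g.s_pos i), rho]
  linarith

theorem feasible_of_reservationUtility_add_cost_le (h : isSPO p i)
    (hres : reservationUtility g p i + g.c i ≤
      rho g (g.s i) (extDeleg p i) - rOf g p * extDeleg p i) : feasible g p i := by
  have hrate : rOf g p * g.s i ≤ reservationUtility g p i :=
    le_max_of_le_right (mul_le_mul_of_nonneg_right (le_max_left _ _) (g.s_pos i).le)
  have hcost : 0 ≤ g.c i := g.cmin_nonneg.trans (g.cmin_le i)
  refine ⟨h, ?_⟩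
  rw [poolSize, pledge_of_isSPO h]
  linarith

theorem reservationUtility_le_of_isSPO (h : isSPO p i)
    (hminus : betaMinus g (g.s i) (g.c i) (g.eps i) (rOf g p) ≤ (extDeleg p i : EReal))
    (hplus : (extDeleg p i : EReal) ≤ betaPlus g (g.s i) (g.c i) (g.eps i) (rOf g p)) :
    reservationUtility g p i ≤ utility g p i := by
  have hgap := gap_le_of_betaMinus_le_of_le_betaPlus (g.s_pos i).le (g.tau_gt i) (g.cmin_le i)
    hminus hplus
  have hres := reservationUtility_add_cost_le_of_gap_le hgap
  rw [utility_of_feasible (feasible_of_reservationUtility_add_cost_le h hres)]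
  exact le_sub_right_of_add_le hres

end ProperDelegationGame

/-- **Sufficient conditions for pure Nash equilibrium in proper delegation games.**
Let `p` be a valid joint strategy profile of a proper delegation game with resulting
per-unit delegation reward `r = rOf g p`.  Suppose:
(i) every delegator delegates only to (active) feasible pools;
(ii) every non-idle player `i` earns utility at least `ε_i`;
(iii) every idle player `i` satisfies `max r (α(s_i, cmin)) · s_i ≤ ε_i`; and
(iv) every SPO `i` (with pledge `λ_i = s_i < τ` and external delegation `β_i`)
satisfies `β⁻(λ_i, c_i, ε_i, r) ≤ β_i ≤ β⁺(λ_i, c_i, ε_i, r)`.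
Then `p` is a pure Nash equilibrium. -/
theorem PNE_sufficient_conditions {n : ℕ}
    (g : ProperDelegationGame n) (p : Fin n → ProperDelegationGame.Action n)
    (hvalid : g.ValidProfile p)
    (h1 : ∀ i (d : Fin n → ℝ), p i = ProperDelegationGame.Action.deleg d →
      ∀ j, 0 < d j → feasible g p j)
    (h2 : ∀ i, p i ≠ ProperDelegationGame.Action.idle → g.eps i ≤ utility g p i)
    (h3 : ∀ i, p i = ProperDelegationGame.Action.idle →
      max (rOf g p) (g.alpha (g.s i) g.cmin) * g.s i ≤ g.eps i)
    (h4 : ∀ i, p i = ProperDelegationGame.Action.spo →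
      betaMinus g (g.s i) (g.c i) (g.eps i) (rOf g p) ≤ (extDeleg p i : EReal) ∧
      (extDeleg p i : EReal) ≤ betaPlus g (g.s i) (g.c i) (g.eps i) (rOf g p)) :
    IsPNE g p := by
  have hfeas : ∀ i j, 0 < delegAmt p i j → feasible g p j := by
    intro i j hpos
    obtain ⟨d, hd⟩ := isDeleg_of_delegAmt_ne_zero hpos.ne'
    exact h1 i d hd j (delegAmt_of_eq_deleg hd j ▸ hpos)
  refine hvalid.isPNE_of_reservationUtility_le (fun i j hpos => (hfeas i j hpos).1) fun i => ?_
  cases hpi : p i with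
  | idle => exact (max_le le_rfl (h3 i hpi)).trans (utility_of_idle hpi).ge
  | spo => exact reservationUtility_le_of_isSPO hpi (h4 i hpi).1 (h4 i hpi).2
  | deleg d =>
    have heps : g.eps i ≤ utility g p i := h2 i (by simp [hpi])
    exact hvalid.reservationUtility_le_of_isDeleg ⟨d, hpi⟩ (hfeas i) heps
end
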